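/- Let p > 2 be prime, let g be a primitive root modulo p, and let a ≥ 0, r > 0, N > 0 be integers such that the arithmetic progression J = {a + r, a + 2r, …, a + Nr} is contained in [1, p−1]. Let L(g, J) = { log_g(a + jr) : 1 ≤ j ≤ N }. There exists an absolute constant c₃ > 0 such that for every δ > 0 and every subinterval I of [0, p−1] of length M satisfying M·N > (c₃/δ) · p^{3/2} · (log p)², the number of elements of L(g, J) lying in I is at least (1−δ)·M·N/p and at most (1+δ)·M·N/p. -/

import Mathlib

/-!
Write `n = p - 1`, let `e_q` be the standard additive character of `ZMod q`, and let `I` be the set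
of `K` consecutive integers in `[0, n)` that lie in the given interval. The quantity to estimate is
the number of pairs `(j, i)` with `1 ≤ j ≤ N`, `i ∈ I` and `g ^ i = a + j r` in `ZMod p`. Detecting
the equation `g ^ m = a + j r` by additive characters modulo `p` and `m = i` by additive characters
modulo `n` gives (`count_eq_sum_gaussExpSum`)

  `p n · count = ∑_{h mod p} ∑_{k mod n} S(h, k) A(h) B(k)`,

where `S(h, k) = ∑_{m mod n} e_p(h g ^ m) e_n(k m)` is a Gauss sum, and `A`, `B` are exponential sums
over the progression and over `I`. The terms with `h = 0` contribute exactly `n N K`.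

For `h ≠ 0` one has `|S(h, k)| ≤ √p` (`norm_gaussExpSum_le`): replacing `h` by `h g ^ t` only
multiplies `S(h, k)` by a root of unity, while `∑_h |S(h, k)|² = p n` by orthogonality. The sums `A`
and `B` are geometric, and Jordan's inequality for the sine bounds their `ℓ¹` norms over nonzero
frequencies by `q (1 + log q)`, with `q = p` and `q = n` (`sum_norm_sum_progression_le`).

Hence `|count - N K / p| ≤ √p (1 + log p) (2 + log p)`, and as `|K - M| ≤ 1` the same holds, up to
a constant, with `M` in place of `K`. The hypothesis on `M N` says precisely that an error
`8 √p (log p)²` is smaller than `δ M N / p`.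
-/

open Finset

/-! ### Exponential sums over arithmetic progressions -/

lemma stdAddChar_eq_exp {q : ℕ} [NeZero q] (k : ZMod q) :
    (ZMod.stdAddChar k : ℂ) = Complex.exp (Complex.I * ((2 * Real.pi * k.val / q : ℝ) : ℂ)) := by
  have h := ZMod.stdAddChar_coe (N := q) (k.val : ℤ)
  have hk : (((k.val : ℤ)) : ZMod q) = k := by simp
  rw [hk] at h
  rw [h]
  congr 1
  push_cast
  ring

lemma norm_stdAddChar {q : ℕ} [NeZero q] (k : ZMod q) : ‖(ZMod.stdAddChar k : ℂ)‖ = 1 := by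
  rw [stdAddChar_eq_exp, mul_comm, Complex.norm_exp_ofReal_mul_I]

/-- Since `|e(v/q) - 1| = 2 sin (π v / q)` is at least `4 min (v/q, 1 - v/q)`, its inverse is
controlled by `q / v + q / (q - v)`. The symmetric form makes the sum over all `k` a harmonic sum. -/
lemma two_div_norm_sub_one_le {q : ℕ} [NeZero q] {k : ZMod q} (hk : k ≠ 0) :
    ZMod.stdAddChar k ≠ (1 : ℂ) ∧ 2 / ‖(ZMod.stdAddChar k : ℂ) - 1‖ ≤
      (q : ℝ) / 2 * ((k.val : ℝ)⁻¹ + ((-k).val : ℝ)⁻¹) := by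
  have hq : (0 : ℝ) < q := by exact_mod_cast Nat.pos_of_ne_zero (NeZero.ne q)
  have hv0 : (0 : ℝ) < k.val := by
    exact_mod_cast Nat.pos_of_ne_zero (by simpa [ZMod.val_eq_zero] using hk)
  have hvq : (k.val : ℝ) < q := by exact_mod_cast ZMod.val_lt k
  have hneg : ((-k).val : ℝ) = q - k.val := by
    rw [ZMod.neg_val, if_neg hk, Nat.cast_sub (ZMod.val_lt k).le]
  rw [hneg]
  set v : ℝ := (k.val : ℝ) with hv
  have hnorm : ‖(ZMod.stdAddChar k : ℂ) - 1‖ = 2 * |Real.sin (Real.pi * v / q)| := by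
    rw [stdAddChar_eq_exp, Complex.norm_exp_I_mul_ofReal_sub_one]
    simp only [Real.norm_eq_abs, abs_mul, abs_two]
    congr 3
    rw [← hv]; ring
  -- Jordan's inequality, applied to whichever of `v / q` and `1 - v / q` is at most `1 / 2`.
  have key : ∃ w : ℝ, 0 < w ∧ (w = v ∨ w = q - v) ∧ 2 * w / q ≤ Real.sin (Real.pi * v / q) := by
    have aux : ∀ w : ℝ, 0 < w → w ≤ q / 2 → 2 * w / q ≤ Real.sin (Real.pi * w / q) := by
      intro w hw hwq
      have := Real.mul_le_sin (x := Real.pi * w / q) (by positivity)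
        (by rw [div_le_iff₀ hq]; nlinarith [Real.pi_pos])
      refine le_trans (le_of_eq ?_) this
      field_simp
    rcases le_total v (q / 2) with h | h
    · exact ⟨v, hv0, Or.inl rfl, aux v hv0 h⟩
    · refine ⟨q - v, by linarith, Or.inr rfl, ?_⟩
      have := aux (q - v) (by linarith) (by linarith)
      have e : Real.pi * (q - v) / q = Real.pi - Real.pi * v / q := by field_simp
      rwa [e, Real.sin_pi_sub] at this
  obtain ⟨w, hw0, hw, hs⟩ := key
  have hpos : 0 < 2 * w / q := by positivity
  have hn : 2 * (2 * w / q) ≤ ‖(ZMod.stdAddChar k : ℂ) - 1‖ := by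
    rw [hnorm]; linarith [le_abs_self (Real.sin (Real.pi * v / q))]
  constructor
  · intro h
    rw [h] at hn; simp at hn; linarith
  · calc 2 / ‖(ZMod.stdAddChar k : ℂ) - 1‖ ≤ 2 / (2 * (2 * w / q)) := by gcongr
      _ = q / 2 * w⁻¹ := by field_simp
      _ ≤ _ := by
        have h1 : 0 < v⁻¹ := inv_pos.mpr hv0
        have h2 : 0 < (q - v)⁻¹ := inv_pos.mpr (by linarith)
        gcongr
        rcases hw with rfl | rfl <;> linarith

/-- The sum is geometric with ratio `stdAddChar k`, so it is at most `2 / |stdAddChar k - 1|`. -/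
lemma norm_sum_progression_le {q : ℕ} [NeZero q] (α k : ZMod q) (hk : k ≠ 0) (u v : ℕ) :
    ‖∑ j ∈ Ico u v, (ZMod.stdAddChar (α + k * (j : ZMod q)) : ℂ)‖ ≤
      (q : ℝ) / 2 * ((k.val : ℝ)⁻¹ + ((-k).val : ℝ)⁻¹) := by
  obtain ⟨h1, h2⟩ := two_div_norm_sub_one_le hk
  rcases le_total v u with huv | huv
  · rw [Ico_eq_empty_of_le huv, sum_empty, norm_zero]; positivity
  have e : ∀ j : ℕ, (ZMod.stdAddChar (α + k * (j : ZMod q)) : ℂ) =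
      ZMod.stdAddChar α * (ZMod.stdAddChar k) ^ j := by
    intro j
    rw [AddChar.map_add_eq_mul, ← AddChar.map_nsmul_eq_pow, nsmul_eq_mul, mul_comm k]
  simp_rw [e]
  rw [← mul_sum, norm_mul, norm_stdAddChar, one_mul, geom_sum_Ico h1 huv, norm_div]
  refine le_trans ?_ h2
  gcongr
  refine (norm_sub_le _ _).trans ?_
  simp [norm_pow]
  norm_num

/-- The term `k = 0` contributes `0⁻¹ = 0`, so the left side is a harmonic number. -/
lemma sum_inv_val_le {q : ℕ} [NeZero q] :
    ∑ k : ZMod q, (k.val : ℝ)⁻¹ ≤ 1 + Real.log q := by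
  have hq : 0 < q := Nat.pos_of_ne_zero (NeZero.ne q)
  have h1 : ∑ k : ZMod q, (k.val : ℝ)⁻¹ = ∑ i ∈ range q, (i : ℝ)⁻¹ := by
    refine sum_bij (fun k _ => k.val) ?_ ?_ ?_ ?_
    · intro k _; simpa using ZMod.val_lt k
    · intro k _ l _ h; exact ZMod.val_injective q h
    · intro i hi
      exact ⟨(i : ZMod q), mem_univ _, ZMod.val_cast_of_lt (by simpa using hi)⟩
    · intro k _; rfl
  have h2 : ∑ i ∈ range q, (i : ℝ)⁻¹ = (harmonic (q - 1) : ℝ) := by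
    obtain ⟨m, rfl⟩ : ∃ m, q = m + 1 := ⟨q - 1, by omega⟩
    rw [sum_range_succ', harmonic]
    simp
  rw [h1, h2]
  refine (harmonic_le_one_add_log _).trans ?_
  gcongr 1 + ?_
  rcases Nat.eq_zero_or_pos (q - 1) with h | h
  · rw [h]; simp; exact Real.log_natCast_nonneg q
  · exact Real.log_le_log (by exact_mod_cast h) (by exact_mod_cast Nat.sub_le q 1)

/-- The `ℓ¹` norm, over nonzero frequencies, of the Fourier transform of an arithmetic progression
whose difference `β` is a unit. Multiplying the frequencies by `β` reduces to difference `1`. -/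
lemma sum_norm_sum_progression_le {q : ℕ} [NeZero q] (α β : ZMod q) (hβ : IsUnit β) (u v : ℕ) :
    ∑ h ∈ univ.erase (0 : ZMod q),
      ‖∑ j ∈ Ico u v, (ZMod.stdAddChar (h * (α + β * (j : ZMod q))) : ℂ)‖ ≤
      q * (1 + Real.log q) := by
  obtain ⟨b, rfl⟩ := hβ
  set f : ZMod q → ℝ := fun k => (q : ℝ) / 2 * ((k.val : ℝ)⁻¹ + ((-k).val : ℝ)⁻¹) with hf
  have hf0 : ∀ k, 0 ≤ f k := fun k => by simp only [hf]; positivity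
  calc _ ≤ ∑ h ∈ univ.erase (0 : ZMod q), f (h * b) := by
        refine sum_le_sum fun h hh => ?_
        have hh0 : h * (b : ZMod q) ≠ 0 := by
          intro h0
          exact (mem_erase.mp hh).1 ((Units.mul_left_eq_zero b).mp h0)
        have := norm_sum_progression_le (h * α) (h * b) hh0 u v
        simpa only [hf, mul_add, mul_assoc] using this
    _ ≤ ∑ h, f (h * b) := sum_le_sum_of_subset_of_nonneg (subset_univ _) fun k _ _ => hf0 _
    _ = ∑ h, f h := Equiv.sum_comp (Units.mulRight b) f
    _ = q * ∑ h : ZMod q, (h.val : ℝ)⁻¹ := by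
        have := Equiv.sum_comp (Equiv.neg (ZMod q)) (fun k : ZMod q => (k.val : ℝ)⁻¹)
        simp only [Equiv.neg_apply] at this
        simp only [hf]
        rw [← mul_sum, sum_add_distrib, this]
        ring
    _ ≤ _ := by gcongr; exact sum_inv_val_le

/-! ### Gauss sums along the powers of a primitive root -/

/-- The Gauss sum `∑_{m mod n} e_p(h G ^ m) e_n(k m)`. The power `G ^ m` for `m : ZMod n` is taken
with the representative `m.val ∈ [0, n)`; it depends only on `m` modulo `n` when `G` has order `n`,
which the lemmas below assume where needed. -/
noncomputable def gaussExpSum {p n : ℕ} [NeZero p] [NeZero n] (G h : ZMod p) (k : ZMod n) : ℂ :=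
  ∑ m : ZMod n, ZMod.stdAddChar (h * G ^ m.val) * ZMod.stdAddChar (k * m)

lemma gaussExpSum_zero {p n : ℕ} [NeZero p] [NeZero n] (G : ZMod p) (k : ZMod n) :
    gaussExpSum G 0 k = if k = 0 then (n : ℂ) else 0 := by
  have := AddChar.sum_mulShift k (ZMod.isPrimitive_stdAddChar n)
  simp only [ZMod.card] at this
  simp only [gaussExpSum, zero_mul, AddChar.map_zero_eq_one, one_mul, mul_comm k]
  rw [this]
  split_ifs <;> simp

lemma pow_val_add {p n : ℕ} [NeZero n] {G : ZMod p} (hG : orderOf G = n) (t m : ZMod n) :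
    G ^ (t + m).val = G ^ t.val * G ^ m.val := by
  rw [ZMod.val_add, ← pow_add]
  simpa only [hG] using pow_mod_orderOf G (t.val + m.val)

lemma pow_val_injective {p n : ℕ} [Fact p.Prime] [NeZero n] {G : ZMod p} (hG : orderOf G = n) :
    Function.Injective fun m : ZMod n => G ^ m.val := by
  intro s t h
  apply ZMod.val_injective
  exact pow_injOn_Iio_orderOf (by simpa [hG] using ZMod.val_lt s)
    (by simpa [hG] using ZMod.val_lt t) h

/-- Translating the summation variable `m` by `t` shows that the absolute value of the Gauss sum is
constant on the orbit of `h` under the powers of `G`. -/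
lemma gaussExpSum_shift {p n : ℕ} [NeZero p] [NeZero n] {G : ZMod p} (hG : orderOf G = n)
    (h : ZMod p) (k t : ZMod n) :
    gaussExpSum G (h * G ^ t.val) k = ZMod.stdAddChar (-(k * t)) * gaussExpSum G h k := by
  unfold gaussExpSum
  rw [← Equiv.sum_comp (Equiv.addLeft t) (fun m : ZMod n =>
    (ZMod.stdAddChar (h * G ^ m.val) * ZMod.stdAddChar (k * m) : ℂ)), mul_sum]
  refine sum_congr rfl fun m _ => ?_
  simp only [Equiv.coe_addLeft]
  rw [pow_val_add hG, mul_left_comm, ← AddChar.map_add_eq_mul]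
  congr 2
  · ring
  · ring

/-- Parseval's identity: the powers `G ^ m`, for `m` modulo `n`, are pairwise distinct. -/
lemma sum_norm_sq_gaussExpSum {p n : ℕ} [Fact p.Prime] [NeZero n] {G : ZMod p}
    (hG : orderOf G = n) (k : ZMod n) :
    ∑ h : ZMod p, ‖gaussExpSum G h k‖ ^ 2 = p * n := by
  have key : ∑ h : ZMod p, gaussExpSum G h k * (starRingEnd ℂ) (gaussExpSum G h k) = p * n := by
    have e : ∀ h : ZMod p, gaussExpSum G h k * (starRingEnd ℂ) (gaussExpSum G h k) =
        ∑ m : ZMod n, ∑ l : ZMod n, ZMod.stdAddChar (k * m) * ZMod.stdAddChar (-(k * l)) *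
          ZMod.stdAddChar (h * (G ^ m.val - G ^ l.val)) := by
      intro h
      unfold gaussExpSum
      rw [map_sum, sum_mul_sum]
      refine sum_congr rfl fun m _ => sum_congr rfl fun l _ => ?_
      rw [map_mul (starRingEnd ℂ), ← AddChar.map_neg_eq_conj, ← AddChar.map_neg_eq_conj,
        mul_sub, sub_eq_add_neg, AddChar.map_add_eq_mul]
      ring
    simp_rw [e]
    rw [sum_comm]
    simp_rw [sum_comm (s := (univ : Finset (ZMod p))), ← mul_sum,
      AddChar.sum_mulShift _ (ZMod.isPrimitive_stdAddChar p), sub_eq_zero,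
      (pow_val_injective hG).eq_iff, ZMod.card]
    have : ∀ m : ZMod n, (ZMod.stdAddChar (k * m) * ZMod.stdAddChar (-(k * m)) : ℂ) = 1 := by
      intro m
      rw [← AddChar.map_add_eq_mul, add_neg_cancel, AddChar.map_zero_eq_one]
    simp [this, mul_comm]
  have : ((∑ h : ZMod p, ‖gaussExpSum G h k‖ ^ 2 : ℝ) : ℂ) = ((p * n : ℝ) : ℂ) := by
    push_cast
    rw [← key]
    exact sum_congr rfl fun h _ => (Complex.mul_conj' _).symm
  exact_mod_cast this

/-- The orbit of `h` under the powers of `G` has `n` elements, on all of which the Gauss sum has the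
same absolute value; the mean square over all of `ZMod p` then gives the bound `√p`. -/
lemma norm_gaussExpSum_le {p n : ℕ} [Fact p.Prime] [NeZero n] {G : ZMod p}
    (hG : orderOf G = n) {h : ZMod p} (hh : h ≠ 0) (k : ZMod n) :
    ‖gaussExpSum G h k‖ ≤ √p := by
  have hn : (0 : ℝ) < n := by exact_mod_cast Nat.pos_of_ne_zero (NeZero.ne n)
  have h1 : (n : ℝ) * ‖gaussExpSum G h k‖ ^ 2 ≤ p * n := by
    calc (n : ℝ) * ‖gaussExpSum G h k‖ ^ 2
        = ∑ t : ZMod n, ‖gaussExpSum G (h * G ^ t.val) k‖ ^ 2 := by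
          simp_rw [gaussExpSum_shift hG, norm_mul, norm_stdAddChar]
          simp
      _ = ∑ x ∈ univ.image (fun t : ZMod n => h * G ^ t.val), ‖gaussExpSum G x k‖ ^ 2 := by
          rw [sum_image]
          intro s _ t _ hst
          exact pow_val_injective hG (mul_left_cancel₀ hh hst)
      _ ≤ ∑ x : ZMod p, ‖gaussExpSum G x k‖ ^ 2 :=
          sum_le_sum_of_subset_of_nonneg (subset_univ _) fun _ _ _ => by positivity
      _ = p * n := sum_norm_sq_gaussExpSum hG k
  refine Real.le_sqrt_of_sq_le ?_
  nlinarith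

/-! ### Counting coincidences -/

/-- Orthogonality of characters modulo `p` detects `G ^ m = b j`, and modulo `n` detects `m = i`. -/
lemma count_eq_sum_gaussExpSum {p n : ℕ} [Fact p.Prime] [NeZero n] (G : ZMod p)
    (J I : Finset ℕ) (b : ℕ → ZMod p) (hI : ∀ i ∈ I, i < n) :
    (p : ℂ) * n * ∑ j ∈ J, ∑ i ∈ I, (if G ^ i = b j then (1 : ℂ) else 0) =
      ∑ h : ZMod p, ∑ k : ZMod n, gaussExpSum G h k *
        (∑ j ∈ J, ZMod.stdAddChar (h * -b j)) * ∑ i ∈ I, ZMod.stdAddChar (k * -(i : ZMod n)) := by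
  symm
  calc _ = ∑ h : ZMod p, ∑ k : ZMod n, ∑ j ∈ J, ∑ i ∈ I, ∑ m : ZMod n,
        (ZMod.stdAddChar (h * (G ^ m.val - b j)) : ℂ) *
          ZMod.stdAddChar (k * (m - (i : ZMod n))) := by
        refine sum_congr rfl fun h _ => sum_congr rfl fun k _ => ?_
        rw [mul_assoc, sum_mul_sum, gaussExpSum, mul_sum]
        refine sum_congr rfl fun j _ => ?_
        rw [mul_sum]
        refine sum_congr rfl fun i _ => ?_
        rw [sum_mul]
        refine sum_congr rfl fun m _ => ?_
        rw [sub_eq_add_neg, sub_eq_add_neg, mul_add, mul_add, AddChar.map_add_eq_mul,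
          AddChar.map_add_eq_mul]
        ring
    _ = ∑ j ∈ J, ∑ i ∈ I, ∑ m : ZMod n,
        (∑ h : ZMod p, (ZMod.stdAddChar (h * (G ^ m.val - b j)) : ℂ)) *
          ∑ k : ZMod n, ZMod.stdAddChar (k * (m - (i : ZMod n))) := by
        simp_rw [sum_mul_sum]
        simp_rw [sum_comm (s := (univ : Finset (ZMod n))) (t := J),
          sum_comm (s := (univ : Finset (ZMod p))) (t := J)]
        refine sum_congr rfl fun j _ => ?_
        simp_rw [sum_comm (s := (univ : Finset (ZMod n))) (t := I),
          sum_comm (s := (univ : Finset (ZMod p))) (t := I)]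
        refine sum_congr rfl fun i _ => ?_
        rw [sum_congr rfl fun h _ => sum_comm, sum_comm]
    _ = _ := by
        rw [mul_sum]
        refine sum_congr rfl fun j _ => ?_
        rw [mul_sum]
        refine sum_congr rfl fun i hi => ?_
        simp_rw [AddChar.sum_mulShift _ (ZMod.isPrimitive_stdAddChar p),
          AddChar.sum_mulShift _ (ZMod.isPrimitive_stdAddChar n), sub_eq_zero, ZMod.card]
        rw [sum_eq_single (i : ZMod n)]
        · rw [ZMod.val_cast_of_lt (hI i hi)]
          split_ifs <;> simp_all
        · intro m _ hm; simp [hm]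
        · simp

/-- The number of coincidences between an arithmetic progression of length `N` and a block of
`v - u` consecutive powers of `G` is `N (v - u) / p` up to `O(√p (log p)²)`. -/
lemma abs_count_sub_le {p n : ℕ} [Fact p.Prime] [NeZero n] (hnp : n ≤ p) {G : ZMod p}
    (hG : orderOf G = n) (a r : ℕ) (hr : IsUnit (r : ZMod p)) (N u v : ℕ) (hv : v ≤ n) :
    |∑ j ∈ Icc 1 N, ∑ i ∈ Ico u v, (if G ^ i = ((a + j * r : ℕ) : ZMod p) then (1 : ℝ) else 0)
      - N * (v - u : ℕ) / p| ≤ √p * (1 + Real.log p) * (2 + Real.log p) := by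
  have hn : (0 : ℝ) < n := by exact_mod_cast Nat.pos_of_ne_zero (NeZero.ne n)
  have hp : (0 : ℝ) < p := by exact_mod_cast (Fact.out : p.Prime).pos
  set C : ℝ := ∑ j ∈ Icc 1 N, ∑ i ∈ Ico u v,
    (if G ^ i = ((a + j * r : ℕ) : ZMod p) then (1 : ℝ) else 0) with hC
  set A : ZMod p → ℂ := fun h => ∑ j ∈ Icc 1 N, ZMod.stdAddChar (h * -((a + j * r : ℕ) : ZMod p))
    with hA
  set B : ZMod n → ℂ := fun k => ∑ i ∈ Ico u v, ZMod.stdAddChar (k * -(i : ZMod n)) with hB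
  have hA0 : A 0 = N := by simp [hA]
  have hB0 : B 0 = (v - u : ℕ) := by simp [hB]
  have hlog : Real.log n ≤ Real.log p := Real.log_le_log hn (by exact_mod_cast hnp)
  have hA1 : ∑ h ∈ univ.erase 0, ‖A h‖ ≤ p * (1 + Real.log p) := by
    have := sum_norm_sum_progression_le (-(a : ZMod p)) (-(r : ZMod p)) hr.neg 1 (N + 1)
    have e : ∀ h, A h = ∑ j ∈ Ico 1 (N + 1),
        ZMod.stdAddChar (h * (-(a : ZMod p) + -(r : ZMod p) * (j : ZMod p))) := by
      intro h
      refine sum_congr (by ext; simp only [mem_Icc, mem_Ico]; omega) fun j _ => ?_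
      congr 1
      push_cast
      ring
    simpa only [e] using this
  have hB1 : ∑ k, ‖B k‖ ≤ n * (2 + Real.log p) := by
    have := sum_norm_sum_progression_le (0 : ZMod n) (-1) isUnit_one.neg u v
    -- The zero frequency of `B` is bounded trivially; it is responsible for `2` instead of `1`.
    have h0 : ‖B 0‖ ≤ n := by
      rw [hB0, Complex.norm_natCast]
      exact_mod_cast (Nat.sub_le v u).trans hv
    rw [← add_sum_erase _ _ (mem_univ 0)]
    have h2 : ∑ k ∈ univ.erase 0, ‖B k‖ ≤ n * (1 + Real.log n) := by
      convert this using 6 with h _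
      simp
    nlinarith
  have key : (p : ℂ) * n * C - n * N * (v - u : ℕ) =
      ∑ h ∈ univ.erase (0 : ZMod p), ∑ k : ZMod n, gaussExpSum G h k * A h * B k := by
    have h1 := count_eq_sum_gaussExpSum G (Icc 1 N) (Ico u v)
      (fun j => ((a + j * r : ℕ) : ZMod p)) (n := n) (fun i hi => (mem_Ico.mp hi).2.trans_le hv)
    have h2 : (C : ℂ) = ∑ j ∈ Icc 1 N, ∑ i ∈ Ico u v,
      (if G ^ i = ((a + j * r : ℕ) : ZMod p) then (1 : ℂ) else 0) := by
      rw [hC]; simp only [Complex.ofReal_sum]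
      refine sum_congr rfl fun j _ => sum_congr rfl fun i _ => ?_
      split_ifs <;> simp
    rw [h2, h1, ← add_sum_erase _ _ (mem_univ 0)]
    have h3 : ∑ k : ZMod n, gaussExpSum G 0 k * A 0 * B k = n * N * (v - u : ℕ) := by
      simp_rw [gaussExpSum_zero]
      rw [sum_eq_single 0]
      · simp [hA0, hB0]
      · intro k _ hk; simp [hk]
      · simp
    rw [← h3]
    simp only [hA, hB]
    ring
  have bound : ‖(p : ℂ) * n * C - n * N * (v - u : ℕ)‖ ≤
      √p * ((p * (1 + Real.log p)) * (n * (2 + Real.log p))) := by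
    rw [key]
    calc _ ≤ ∑ h ∈ univ.erase (0 : ZMod p), ∑ k : ZMod n, √p * (‖A h‖ * ‖B k‖) := by
          refine (norm_sum_le _ _).trans (sum_le_sum fun h hh => ?_)
          refine (norm_sum_le _ _).trans (sum_le_sum fun k _ => ?_)
          rw [norm_mul, norm_mul, mul_assoc]
          gcongr
          exact norm_gaussExpSum_le hG (mem_erase.mp hh).1 k
      _ = √p * ((∑ h ∈ univ.erase (0 : ZMod p), ‖A h‖) * ∑ k, ‖B k‖) := by
          rw [sum_mul_sum, mul_sum]
          simp_rw [mul_sum]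
      _ ≤ _ := by
          have : 0 ≤ Real.log p := Real.log_natCast_nonneg p
          gcongr
  have e : (p : ℂ) * n * C - n * N * (v - u : ℕ) =
      ((p * n * (C - N * (v - u : ℕ) / p) : ℝ) : ℂ) := by
    push_cast
    have : (p : ℂ) ≠ 0 := by exact_mod_cast hp.ne'
    field_simp
  rw [e, Complex.norm_real, Real.norm_eq_abs, abs_mul, abs_of_pos (by positivity)] at bound
  have hpn : 0 < (p : ℝ) * n := by positivity
  refine le_of_mul_le_mul_left (bound.trans (le_of_eq ?_)) hpn
  ring

/-! ### Intervals of discrete logarithms -/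

/-- The integers of `[s, s + M]` that are less than `n` form the block
`Ico ⌈s⌉₊ (min n (⌊s + M⌋₊ + 1))`, and their number differs from the length `M` by at most `1`. The minimum matters only when the
interval reaches the endpoint `n`. -/
lemma abs_card_sub_le {n : ℕ} {s M : ℝ} (hM : 0 ≤ M) (hs : 0 ≤ s) (hsM : s + M ≤ n) :
    |((min n (⌊s + M⌋₊ + 1) - ⌈s⌉₊ : ℕ) : ℝ) - M| ≤ 1 := by
  have h1 := Nat.le_ceil s
  have h2 := Nat.ceil_lt_add_one hs
  have h3 := Nat.floor_le (add_nonneg hs hM)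
  have h4 := Nat.lt_floor_add_one (s + M)
  have h5 : s + M ≤ (min n (⌊s + M⌋₊ + 1) : ℕ) := by
    rw [Nat.cast_min]; push_cast; exact le_min hsM h4.le
  have h6 : ((min n (⌊s + M⌋₊ + 1) : ℕ) : ℝ) ≤ s + M + 1 := by
    rw [Nat.cast_min]; push_cast; exact (min_le_right _ _).trans (by linarith)
  rcases le_total (min n (⌊s + M⌋₊ + 1)) ⌈s⌉₊ with h | h
  · rw [Nat.sub_eq_zero_of_le h, abs_le]
    have : ((min n (⌊s + M⌋₊ + 1) : ℕ) : ℝ) ≤ ⌈s⌉₊ := by exact_mod_cast h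
    constructor <;> push_cast <;> linarith
  · rw [Nat.cast_sub h, abs_le]
    constructor <;> linarith

/-- **Corollary 1.**
Let `p > 2` be prime, `g` a primitive root modulo `p`, and `a ≥ 0`, `r > 0`, `N > 0`
integers such that the progression `J = {a + r, …, a + Nr}` is contained in `[1, p-1]`,
and let `L(g, J) = { log_g(a + jr) : 1 ≤ j ≤ N }`.  There is an absolute constant
`c₃ > 0` such that for every `δ > 0` and every subinterval `[s, s + M]` of `[0, p-1]`
of length `M` with `M·N > (c₃/δ) p^{3/2} (log p)²`, the number of elements of
`L(g, J)` lying in the subinterval is at least `(1-δ) M N / p` and at most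
`(1+δ) M N / p`. -/
theorem count_dlog_in_interval :
    ∃ c₃ : ℝ, 0 < c₃ ∧
      ∀ (p : ℕ), p.Prime → 2 < p →
      ∀ (g : ℕ), IsPrimitiveRoot (g : ZMod p) (p - 1) →
      ∀ (a r N : ℕ), 0 < r → 0 < N →
      (∀ j : ℕ, 1 ≤ j → j ≤ N → 1 ≤ a + j * r ∧ a + j * r ≤ p - 1) →
      ∀ (dlog : ℕ → ℕ),
      (∀ z : ℕ, 1 ≤ z → z ≤ p - 1 →
        dlog z ≤ p - 2 ∧ (g : ZMod p) ^ dlog z = (z : ZMod p)) →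
      ∀ (δ : ℝ), 0 < δ →
      ∀ (s M : ℝ), 0 ≤ M → 0 ≤ s → s + M ≤ (p : ℝ) - 1 →
      M * (N : ℝ) > (c₃ / δ) * (p : ℝ) ^ ((3 : ℝ) / 2) * (Real.log p) ^ 2 →
      (1 - δ) * (M * (N : ℝ) / (p : ℝ)) ≤
          (((Finset.Icc 1 N).filter (fun j : ℕ =>
              s ≤ (dlog (a + j * r) : ℝ) ∧ (dlog (a + j * r) : ℝ) ≤ s + M)).card : ℝ) ∧
      (((Finset.Icc 1 N).filter (fun j : ℕ =>
              s ≤ (dlog (a + j * r) : ℝ) ∧ (dlog (a + j * r) : ℝ) ≤ s + M)).card : ℝ) ≤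
          (1 + δ) * (M * (N : ℝ) / (p : ℝ)) := by
  refine ⟨8, by norm_num, ?_⟩
  intro p hp hp2 g hg a r N hr hN hJ dlog hdlog δ hδ s M hM hs hsM hMN
  have : Fact p.Prime := ⟨hp⟩
  have : NeZero (p - 1) := ⟨by omega⟩
  have hpR : (0 : ℝ) < p := by exact_mod_cast hp.pos
  have hG : orderOf (g : ZMod p) = p - 1 := hg.eq_orderOf.symm
  have hp1 : ((p - 1 : ℕ) : ℝ) = p - 1 := by rw [Nat.cast_sub hp.one_le]; simp
  -- The first term `a + r` is at most `p - 1`, so `r` is nonzero modulo `p` even when `N = 1`.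
  have hrp : r < p := by have := hJ 1 le_rfl hN; omega
  have hNp : N ≤ p := by
    have := (hJ N hN le_rfl).2
    have := Nat.le_mul_of_pos_right N hr
    omega
  have hru : IsUnit (r : ZMod p) := by
    rw [isUnit_iff_ne_zero, Ne, ZMod.natCast_eq_zero_iff]
    exact Nat.not_dvd_of_pos_of_lt hr hrp
  set v := min (p - 1) (⌊s + M⌋₊ + 1) with hv
  set u := ⌈s⌉₊ with hu
  have hmain := abs_count_sub_le (n := p - 1) (by omega) hG a r hru N u v (min_le_left _ _)
  have hcard : |((v - u : ℕ) : ℝ) - M| ≤ 1 := abs_card_sub_le hM hs (by rw [hp1]; exact hsM)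
  have hcount : ∑ j ∈ Icc 1 N, ∑ i ∈ Ico u v,
      (if (g : ZMod p) ^ i = ((a + j * r : ℕ) : ZMod p) then (1 : ℝ) else 0) =
      (((Finset.Icc 1 N).filter (fun j : ℕ =>
        s ≤ (dlog (a + j * r) : ℝ) ∧ (dlog (a + j * r) : ℝ) ≤ s + M)).card : ℝ) := by
    rw [card_filter]
    push_cast
    refine sum_congr rfl fun j hj => ?_
    obtain ⟨hj1, hj2⟩ := mem_Icc.mp hj
    obtain ⟨hz1, hz2⟩ := hJ j hj1 hj2
    obtain ⟨hd1, hd2⟩ := hdlog _ hz1 hz2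
    have huniq : ∀ i ∈ Ico u v, ((g : ZMod p) ^ i = (a : ZMod p) + j * r ↔
        dlog (a + j * r) = i) := by
      intro i hi
      have hi' : i < p - 1 := (mem_Ico.mp hi).2.trans_le (min_le_left _ _)
      push_cast at hd2
      rw [← hd2]
      constructor
      · intro h
        exact (pow_injOn_Iio_orderOf (by simpa [hG] using hi')
          (by simp only [Set.mem_Iio, hG]; omega) h).symm
      · rintro rfl; rfl
    rw [sum_congr rfl fun i hi => if_congr (huniq i hi) rfl rfl, sum_ite_eq]
    refine if_congr ?_ rfl rfl
    rw [mem_Ico, hu, hv, Nat.ceil_le, lt_min_iff, Nat.lt_succ_iff,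
      Nat.le_floor_iff (add_nonneg hs hM)]
    constructor
    · rintro ⟨h1, -, h2⟩; exact ⟨h1, h2⟩
    · rintro ⟨h1, h2⟩; exact ⟨h1, by omega, h2⟩
  rw [hcount] at hmain
  set C : ℝ := (((Finset.Icc 1 N).filter (fun j : ℕ =>
        s ≤ (dlog (a + j * r) : ℝ) ∧ (dlog (a + j * r) : ℝ) ≤ s + M)).card : ℝ)
  set L := Real.log p with hL
  have hL1 : 1 ≤ L := by
    rw [hL, Real.le_log_iff_exp_le hpR]
    have : (3 : ℝ) ≤ p := by exact_mod_cast hp2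
    linarith [Real.exp_one_lt_d9]
  have hsq1 : 1 ≤ √(p : ℝ) := Real.one_le_sqrt.mpr (by exact_mod_cast hp.one_le)
  have h1 : √(p : ℝ) * (1 + L) * (2 + L) ≤ 6 * (√p * L ^ 2) := by
    have : (1 + L) * (2 + L) ≤ 6 * L ^ 2 := by nlinarith
    nlinarith
  have h2 : |(N : ℝ) * (v - u : ℕ) / p - M * N / p| ≤ 2 * (√p * L ^ 2) := by
    have e : (N : ℝ) * (v - u : ℕ) / p - M * N / p = (N / p) * (((v - u : ℕ) : ℝ) - M) := by ring
    have hN1 : (N : ℝ) / p ≤ 1 := by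
      rw [div_le_one hpR]; exact_mod_cast hNp
    have : 1 ≤ √p * L ^ 2 := one_le_mul_of_one_le_of_one_le hsq1 (one_le_pow₀ hL1)
    rw [e, abs_mul, abs_of_nonneg (by positivity)]
    nlinarith [abs_nonneg (((v - u : ℕ) : ℝ) - M)]
  have h3 : 8 * (√p * L ^ 2) ≤ δ * (M * N / p) := by
    have e : (p : ℝ) ^ ((3 : ℝ) / 2) = p * √p := by
      rw [Real.sqrt_eq_rpow, ← Real.rpow_one_add' hpR.le (by norm_num)]
      norm_num
    rw [e] at hMN
    have := mul_lt_mul_of_pos_left hMN (div_pos hδ hpR)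
    have e1 : δ / p * (8 / δ * (p * √p) * L ^ 2) = 8 * (√p * L ^ 2) := by field_simp
    have e2 : δ / p * (M * N) = δ * (M * N / p) := by ring
    linarith
  have h4 := abs_le.mp hmain
  have h5 := abs_le.mp h2
  constructor <;> linarith [h4.1, h4.2, h5.1, h5.2]
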